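/- arXiv:0812.0059 — 3 statements merged into one kernel-verified Lean document; each statement's English description precedes it below -/
import Mathlib

section
/- Let E₀, E and F be finite-dimensional real normed vector spaces. Let Φ : E₀ → E be a continuous map satisfying Φ(tX) = t²·Φ(X) for every real t ≥ 0 and every X ∈ E₀, and suppose Φ⁻¹(0) = {0}. Let π : E → F be a linear map. Then the composition π∘Φ : E₀ → F is a proper map if and only if Φ(E₀) ∩ ker(π) = {0}. -/
/-!
Put `f = π ∘ Φ`, which is continuous and homogeneous of degree two. If `f` vanishes at some
`X ≠ 0`, its zero fibre contains the unbounded ray through `X`, so `f` is not proper.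
Otherwise `‖f‖` has a positive lower bound `c` on the compact unit sphere, homogeneity gives
`c * ‖X‖ ^ 2 ≤ ‖f X‖` everywhere, and so `f` tends to infinity at infinity. Finally, since
`Φ` vanishes only at the origin, `f` having no zero but the origin is the same as
`Φ(E₀) ∩ ker π = {0}`.
-/

/-- A continuous degree-two homogeneous map between finite-dimensional spaces is proper if and
only if it has no nonzero zero. -/
theorem isProperMap_iff_of_homogeneous_two {E₀ F : Type*}
    [NormedAddCommGroup E₀] [NormedSpace ℝ E₀] [FiniteDimensional ℝ E₀]
    [NormedAddCommGroup F] [NormedSpace ℝ F] [FiniteDimensional ℝ F]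
    (f : E₀ → F) (hcont : Continuous f)
    (hhom : ∀ t : ℝ, 0 ≤ t → ∀ X : E₀, f (t • X) = t ^ 2 • f X) :
    IsProperMap f ↔ ∀ X, f X = 0 → X = 0 := by
  have : ProperSpace E₀ := FiniteDimensional.proper ℝ E₀
  have : ProperSpace F := FiniteDimensional.proper ℝ F
  constructor
  · intro hp X hX
    by_contra hne
    have hpos : 0 < ‖X‖ := norm_pos_iff.mpr hne
    obtain ⟨C, hC⟩ := (hp.isCompact_preimage isCompact_singleton).isBounded.exists_norm_le
    have hCX := hC X hX
    have hC0 : 0 < C := hpos.trans_le hCX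
    -- This point of the ray has norm `C + ‖X‖ > C`.
    have h := hC ((C / ‖X‖ + 1) • X) (by
      change f _ = 0
      rw [hhom _ (by positivity), hX, smul_zero])
    rw [norm_smul, Real.norm_of_nonneg (by positivity), add_mul, div_mul_cancel₀ _ hpos.ne'] at h
    linarith
  · intro hz
    obtain ⟨c, hc, hle⟩ := (isCompact_sphere (0 : E₀) 1).exists_forall_le'
      (f := fun X => ‖f X‖) hcont.norm.continuousOn (a := 0) (by
        intro X hX
        refine norm_pos_iff.mpr fun h0 => ?_
        rw [hz X h0] at hX
        simp at hX)
    have hbound : ∀ X : E₀, c * ‖X‖ ^ 2 ≤ ‖f X‖ := by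
      intro X
      rcases eq_or_ne X 0 with rfl | hne
      · simp
      have hpos : 0 < ‖X‖ := norm_pos_iff.mpr hne
      have h1 := hle (‖X‖⁻¹ • X) (by simp [norm_smul, hpos.ne'])
      rw [hhom _ (by positivity), norm_smul, Real.norm_of_nonneg (by positivity), inv_pow,
        inv_mul_eq_div, le_div_iff₀ (by positivity)] at h1
      exact h1
    refine isProperMap_iff_tendsto_cocompact.mpr ⟨hcont, ?_⟩
    rw [← Metric.cobounded_eq_cocompact, ← Metric.cobounded_eq_cocompact,
      ← tendsto_norm_atTop_iff_cobounded]
    exact Filter.tendsto_atTop_mono hbound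
      (((Filter.tendsto_pow_atTop two_ne_zero).comp tendsto_norm_cobounded_atTop).const_mul_atTop hc)

/-- Let `E₀`, `E`, `F` be finite-dimensional real normed vector spaces.
Let `Φ : E₀ → E` be continuous with `Φ (t • X) = t ^ 2 • Φ X` for all real `t ≥ 0`, and
suppose `Φ ⁻¹' {0} = {0}`. Let `π : E → F` be linear. Then `π ∘ Φ` is a proper map if and
only if `Φ(E₀) ∩ ker π = {0}`. -/
theorem properMap_comp_proj_iff_range_inter_ker
    {E₀ E F : Type*}
    [NormedAddCommGroup E₀] [NormedSpace ℝ E₀] [FiniteDimensional ℝ E₀]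
    [NormedAddCommGroup E] [NormedSpace ℝ E] [FiniteDimensional ℝ E]
    [NormedAddCommGroup F] [NormedSpace ℝ F] [FiniteDimensional ℝ F]
    (Φ : E₀ → E) (hcont : Continuous Φ)
    (hhom : ∀ t : ℝ, 0 ≤ t → ∀ X : E₀, Φ (t • X) = t ^ 2 • Φ X)
    (hker : Φ ⁻¹' {0} = {0})
    (π : E →ₗ[ℝ] F) :
    IsProperMap (fun X : E₀ => π (Φ X)) ↔
      Set.range Φ ∩ (LinearMap.ker π : Set E) = {0} := by
  have hzero : ∀ X, Φ X = 0 ↔ X = 0 := fun X => Set.ext_iff.mp hker X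
  rw [isProperMap_iff_of_homogeneous_two (fun X => π (Φ X))
    (π.continuous_of_finiteDimensional.comp hcont)
    (fun t ht X => by simp only [hhom t ht X, map_smul])]
  constructor
  · intro h
    ext y
    constructor
    · rintro ⟨⟨X, rfl⟩, hX⟩
      exact (hzero X).mpr (h X hX)
    · rintro rfl
      exact ⟨⟨0, (hzero 0).mpr rfl⟩, map_zero π⟩
  · intro h X hX
    have hmem : Φ X ∈ Set.range Φ ∩ (LinearMap.ker π : Set E) := ⟨⟨X, rfl⟩, hX⟩
    rw [h] at hmem
    exact (hzero X).mp hmem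
end

section
/- Let g be a finite-dimensional real Lie algebra, B a symmetric invariant bilinear form on g (i.e. B(⁅x, y⁆, z) = −B(y, ⁅x, z⁆) for all x, y, z), p ⊆ g a linear subspace on which B is positive definite, and z₀ ∈ g an element such that ⁅z₀, ⁅z₀, X⁆⁆ = −X for every X ∈ p. Then the continuous map Φ : p → g defined by Φ(X) = −⁅X, ⁅z₀, X⁆⁆ is a proper map. -/
/-!
Pairing with `z₀` controls `Φ`. Writing `w = ⁅z₀, X⁆`, invariance and antisymmetry give
`-B(Φ(X), z₀) = B(w, w)`, and invariance together with `⁅z₀, w⁆ = -X` gives `B(w, w) = B(X, X)`.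
Since `B` is positive definite on the finite-dimensional space `p`, it is bounded below there by
`c ‖X‖²` for some `c > 0`, so `X ↦ B(X, X)` is proper (`isProperMap_quadratic_of_pos`). This map is
the composite of the continuous map `Φ` with the continuous functional `Y ↦ -B(Y, z₀)`, and the
first factor of a proper composite is proper when the middle space is Hausdorff.
-/

theorem continuous_bilinear_apply {X E F : Type*} [TopologicalSpace X]
    [NormedAddCommGroup E] [NormedSpace ℝ E] [FiniteDimensional ℝ E]
    [NormedAddCommGroup F] [NormedSpace ℝ F]
    (b : E →ₗ[ℝ] E →ₗ[ℝ] F) {u v : X → E} (hu : Continuous u) (hv : Continuous v) :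
    Continuous (fun x => b (u x) (v x)) := by
  let b' : E →L[ℝ] E →L[ℝ] F :=
    LinearMap.toContinuousLinearMap (LinearMap.toContinuousLinearMap.toLinearMap ∘ₗ b)
  exact (b'.continuous.comp hu).clm_apply hv

open Filter in
/-- A positive definite quadratic form on a finite-dimensional space is a proper function: its
minimum `c` over the unit sphere is positive, so it dominates `c ‖x‖²`. -/
theorem isProperMap_quadratic_of_pos {E : Type*} [NormedAddCommGroup E] [NormedSpace ℝ E]
    [FiniteDimensional ℝ E] (B : E →ₗ[ℝ] E →ₗ[ℝ] ℝ) (hpos : ∀ x, x ≠ 0 → 0 < B x x) :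
    IsProperMap (fun x : E => B x x) := by
  have hcont := continuous_bilinear_apply B continuous_id continuous_id
  have : ProperSpace E := FiniteDimensional.proper ℝ E
  obtain ⟨c, hc, hcB⟩ := (isCompact_sphere (0 : E) 1).exists_forall_le' hcont.continuousOn
    (a := 0) (fun x hx => hpos x (ne_zero_of_mem_unit_sphere ⟨x, hx⟩))
  have hbound : ∀ x : E, c * ‖x‖ ^ 2 ≤ B x x := by
    intro x
    rcases eq_or_ne x 0 with rfl | hx
    · simp
    have hn : 0 < ‖x‖ := norm_pos_iff.mpr hx
    have h := hcB (‖x‖⁻¹ • x) (by simp [norm_smul, hn.ne'])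
    simp only [id, map_smul, LinearMap.smul_apply, smul_eq_mul] at h
    calc c * ‖x‖ ^ 2 ≤ (‖x‖⁻¹ * (‖x‖⁻¹ * B x x)) * ‖x‖ ^ 2 := by gcongr
      _ = B x x := by field_simp
  refine isProperMap_iff_tendsto_cocompact.mpr ⟨hcont, ?_⟩
  have htop : Tendsto (fun x : E => B x x) (cocompact E) atTop :=
    tendsto_atTop_mono hbound
      (((tendsto_pow_atTop two_ne_zero).comp tendsto_norm_cocompact_atTop).const_mul_atTop hc)
  exact htop.mono_right atTop_le_cocompact

/-- Let `g` be a finite-dimensional real Lie algebra (a finite-dimensional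
real normed space equipped with a Lie bracket, given here as an alternating bilinear map
satisfying the Jacobi identity), `B` a symmetric invariant bilinear form on `g`,
`p ⊆ g` a subspace on which `B` is positive definite, and `z₀ ∈ g` with
`⁅z₀, ⁅z₀, X⁆⁆ = −X` for all `X ∈ p`. Then `Φ : p → g`, `Φ(X) = −⁅X, ⁅z₀, X⁆⁆`, is a
proper map. -/
theorem properMap_moment_map_of_cartan
    {g : Type*} [NormedAddCommGroup g] [NormedSpace ℝ g] [FiniteDimensional ℝ g]
    (bracket : g →ₗ[ℝ] g →ₗ[ℝ] g)
    (halt : ∀ x : g, bracket x x = 0)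
    (hjac : ∀ x y z : g,
      bracket x (bracket y z) + bracket y (bracket z x) + bracket z (bracket x y) = 0)
    (B : g →ₗ[ℝ] g →ₗ[ℝ] ℝ)
    (hsym : ∀ x y : g, B x y = B y x)
    (hinv : ∀ x y z : g, B (bracket x y) z = -B y (bracket x z))
    (p : Submodule ℝ g)
    (hpos : ∀ X ∈ p, X ≠ 0 → 0 < B X X)
    (z₀ : g)
    (hz : ∀ X ∈ p, bracket z₀ (bracket z₀ X) = -X) :
    IsProperMap (fun X : p => -(bracket (X : g) (bracket z₀ (X : g)))) := by
  have hanti : ∀ x y : g, bracket x y = -bracket y x := by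
    intro x y
    have h := halt (x + y)
    simp only [map_add, LinearMap.add_apply, halt, zero_add, add_zero] at h
    rw [add_comm] at h
    exact eq_neg_of_add_eq_zero_left h
  have hpair : ∀ X ∈ p, -B (-(bracket X (bracket z₀ X))) z₀ = B X X := by
    intro X hX
    have h1 := hinv X (bracket z₀ X) z₀
    have h2 := hinv z₀ X (bracket z₀ X)
    rw [hanti X z₀] at h1
    rw [hz X hX] at h2
    simp only [map_neg, LinearMap.neg_apply, neg_neg] at h1 h2 ⊢
    rw [h1, h2]
  have hΦ : Continuous (fun X : p => -(bracket (X : g) (bracket z₀ (X : g)))) :=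
    (continuous_bilinear_apply bracket continuous_subtype_val
      (continuous_bilinear_apply bracket continuous_const continuous_subtype_val)).neg
  have hpairing : Continuous (fun Y : g => -B Y z₀) :=
    (continuous_bilinear_apply B continuous_id continuous_const).neg
  have hq : IsProperMap (fun X : p => B (X : g) (X : g)) :=
    isProperMap_quadratic_of_pos (B.domRestrict₁₂ p p)
      (fun X hX => hpos X X.2 (fun h => hX (Subtype.ext h)))
  refine isProperMap_of_comp_of_t2 hΦ hpairing ?_
  convert hq using 1
  exact funext fun X => hpair X X.2
end

section
/- Let 1 ≤ p < q be integers. In ℝ^{p+q}, consider the cone D = { x ∈ ℝ^{p+q} : x₁ ≥ x₂ ≥ ⋯ ≥ x_p ≥ 0, x_j = 0 for p < j ≤ q, and x_{p+q+1−k} = −x_k for 1 ≤ k ≤ p } and the subspace W' = { x ∈ ℝ^{p+q} : x_{p+1} = x_{p+2} = ⋯ = x_{p+q} and Σ_{j=1}^{p+q} x_j = 0 }. Then D ∩ W' = {0}. -/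
/-!
Since `p < q`, the vanishing middle block `p < j ≤ q` of a vector in `D` is nonempty and meets
the last `q` coordinates, which are all equal on `W'`. Hence the last `q` coordinates vanish.
The partner of each of the first `p` coordinates is among these, so the relation
`x_{p+q+1−k} = −x_k` makes the first `p` coordinates vanish too.
-/

/-- The cone `D = Σₖ ℝ^{≥0}(γ₁+⋯+γₖ)` for `SU(p,q)`, described by inequalities: using
1-based coordinates, `x₁ ≥ ⋯ ≥ x_p ≥ 0`, `x_j = 0` for `p < j ≤ q`, and
`x_{p+q+1−k} = −x_k` for `1 ≤ k ≤ p` (in 0-based indexing the partner of `i` is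
`p+q−1−i`). -/
def coneD (p q : ℕ) : Set (Fin (p + q) → ℝ) :=
  {x | (∀ i j : Fin (p + q), (i : ℕ) < p → (j : ℕ) < p → i ≤ j → x j ≤ x i) ∧
       (∀ i : Fin (p + q), (i : ℕ) < p → 0 ≤ x i) ∧
       (∀ j : Fin (p + q), p ≤ (j : ℕ) → (j : ℕ) < q → x j = 0) ∧
       (∀ i j : Fin (p + q), (i : ℕ) < p → (j : ℕ) = p + q - 1 - (i : ℕ) → x j = -x i)}

/-- The subspace `W' = h^⊥ ∩ t*` for `H = SU(q)` inside `K = S(U(p)×U(q))`: the last `q`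
coordinates are all equal, and the sum of all coordinates is `0`. -/
def subspaceW' (p q : ℕ) : Set (Fin (p + q) → ℝ) :=
  {x | (∀ i j : Fin (p + q), p ≤ (i : ℕ) → p ≤ (j : ℕ) → x i = x j) ∧ ∑ j, x j = 0}

/-- For `1 ≤ p < q`, one has `D ∩ W' = {0}`. -/
theorem coneD_inter_subspaceW'_eq_zero
    (p q : ℕ) (hp : 1 ≤ p) (hpq : p < q) :
    coneD p q ∩ subspaceW' p q = {0} := by
  ext x
  simp only [Set.mem_inter_iff, Set.mem_singleton_iff]
  constructor
  · rintro ⟨⟨-, -, hzero, hneg⟩, hconst, -⟩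
    -- Coordinate `p` (0-based) exists and lies in the middle block because `p < q`.
    have htail (j : Fin (p + q)) (hj : p ≤ (j : ℕ)) : x j = 0 := by
      rw [hconst j ⟨p, by omega⟩ hj le_rfl]
      exact hzero _ le_rfl hpq
    funext i
    by_cases hi : (i : ℕ) < p
    · have h := hneg i ⟨p + q - 1 - i, by omega⟩ hi rfl
      rw [htail _ (show p ≤ p + q - 1 - (i : ℕ) by omega)] at h
      simpa using h.symm
    · exact htail i (not_lt.mp hi)
  · rintro rfl
    simp [coneD, subspaceW']
end
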